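/- arXiv:2307.07809 — 2 statements merged into one kernel-verified Lean document; each statement's English description precedes it below -/
import Mathlib

section
/- Let m and ℓ be integers with m ≥ 2, ℓ ≥ 2 and (m,ℓ) ≠ (2,2). Then the center of G(m,ℓ) is infinite cyclic, generated by Δ^{m/gcd(m,ℓ)}; in particular Δ^{m/gcd(m,ℓ)} has infinite order and the center equals the set of its integer powers. -/
/-- The word `a_i a_{i+1} ⋯ a_{i+p-1}` (indices mod `m`) in the free group on `ZMod m`. -/
def circWord (m : ℕ) (i : ZMod m) (p : ℕ) : FreeGroup (ZMod m) :=
  ((List.range p).map (fun k => FreeGroup.of (i + (k : ZMod m)))).prod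

/-- The defining relations of the circular group `G(m,ℓ)`. -/
def circRels (m ℓ : ℕ) : Set (FreeGroup (ZMod m)) :=
  { r | ∃ i : ZMod m, r = circWord m i ℓ * (circWord m (i + 1) ℓ)⁻¹ }

/-- The circular group `G(m,ℓ)`. -/
abbrev CircularGroup (m ℓ : ℕ) := PresentedGroup (circRels m ℓ)

/-- The generator `a_i` of the circular group `G(m,ℓ)`. -/
def circGen (m ℓ : ℕ) (i : ZMod m) : CircularGroup m ℓ :=
  PresentedGroup.of i

/-- The element `s(i,p) = a_i a_{i+1} ⋯ a_{i+p-1}` of the circular group `G(m,ℓ)`. -/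
def circS (m ℓ : ℕ) (i : ZMod m) (p : ℕ) : CircularGroup m ℓ :=
  ((List.range p).map (fun k => circGen m ℓ (i + (k : ZMod m)))).prod

/-- The Garside element `Δ = s(0,ℓ)` of the circular group `G(m,ℓ)`. -/
def circDelta (m ℓ : ℕ) : CircularGroup m ℓ := circS m ℓ 0 ℓ

namespace Monoid.CoprodI

variable {ι : Type*} {G : ι → Type*} [∀ i, Group (G i)]

theorem NeWord.prod_ne_one {i j : ι} (w : NeWord G i j) : w.prod ≠ 1 := by
  classical
  intro h
  have hw : w.toWord = Word.empty := by
    apply Word.equiv.symm.injective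
    exact h.trans Word.prod_empty.symm
  exact w.toList_ne_nil (congrArg Word.toList hw)

/-- A reduced word whose end letters lie in different factors splits off its first letter. -/
theorem NeWord.exists_prod_eq_of_mul {i j : ι} (w : NeWord G i j) (hij : i ≠ j) :
    ∃ (h : G i) (k : ι) (w' : NeWord G k j), h ≠ 1 ∧ i ≠ k ∧ w.prod = of h * w'.prod := by
  have key : (∃ h : G i, h ≠ 1 ∧ i = j ∧ w.prod = of h) ∨
      ∃ (h : G i) (k : ι) (w' : NeWord G k j), h ≠ 1 ∧ i ≠ k ∧ w.prod = of h * w'.prod := by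
    clear hij
    induction w with
    | singleton x hx => exact Or.inl ⟨x, hx, rfl, by simp⟩
    | append w₁ hne w₂ ih₁ _ =>
      right
      obtain ⟨h, hh, rfl, hp⟩ | ⟨h, k, w', hh, hk, hp⟩ := ih₁
      · exact ⟨h, _, w₂, hh, hne, by simp [hp]⟩
      · exact ⟨h, k, .append w' hne w₂, hh, hk, by simp [hp, mul_assoc]⟩
  exact key.resolve_left fun ⟨_, _, h, _⟩ => hij h

/-- A free product with at least two nontrivial factors has trivial center. -/
theorem eq_one_of_mem_center {p q : ι} (hpq : p ≠ q) [Nontrivial (G p)] [Nontrivial (G q)]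
    {x : CoprodI G} (hx : x ∈ Subgroup.center (CoprodI G)) : x = 1 := by
  classical
  by_contra hne
  obtain ⟨i, j, w, hw⟩ := NeWord.of_word (Word.equiv x) fun h => hne <|
    Word.equiv.injective (h.trans (Word.equiv.eq_symm_apply.mp Word.prod_empty.symm).symm)
  have hwx : w.prod = x := by
    rw [NeWord.prod, hw]
    exact Word.equiv.symm_apply_apply x
  rw [Subgroup.mem_center_iff] at hx
  obtain rfl | hij := eq_or_ne i j
  · obtain ⟨k, hki, g, hg⟩ : ∃ k, k ≠ i ∧ ∃ g : G k, g ≠ 1 := by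
      by_cases hpi : p = i
      · exact ⟨q, hpi ▸ hpq.symm, exists_ne 1⟩
      · exact ⟨p, hpi, exists_ne 1⟩
    refine (NeWord.append (.append (.append (.singleton g hg) hki w) hki.symm
      (.singleton g⁻¹ (inv_ne_one.mpr hg))) hki w.inv).prod_ne_one ?_
    simp [hwx, hx (of g)]
  · obtain ⟨h, k, w', hh, hik, hp⟩ := w.exists_prod_eq_of_mul hij
    have hc : of h * w'.prod = w'.prod * of h := by
      have := hx (of h)
      rw [← hwx, hp, mul_assoc] at this
      exact mul_left_cancel this
    refine (NeWord.append (.append (.append (.singleton h hh) hik w') hij.symm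
      (.singleton h⁻¹ (inv_ne_one.mpr hh))) hij w'.inv).prod_ne_one ?_
    simp [hc]

end Monoid.CoprodI

/-- The free product of the cyclic groups of orders `n i`, where order `0` means infinite. -/
abbrev CyclicFreeProduct {ι : Type*} (n : ι → ℕ) :=
  Monoid.CoprodI fun i => Multiplicative (ZMod (n i))

namespace CyclicFreeProduct

variable {ι : Type*} {n : ι → ℕ} {H : Type*} [Group H]

/-- The standard generator of the `i`-th factor. -/
def gen (n : ι → ℕ) (i : ι) : CyclicFreeProduct n :=
  Monoid.CoprodI.of (i := i) (Multiplicative.ofAdd (1 : ZMod (n i)))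

theorem gen_pow (i : ι) : gen n i ^ n i = 1 := by
  rw [gen, ← map_pow, ← ofAdd_nsmul]
  simp

theorem gen_eq_one {i : ι} (h : n i = 1) : gen n i = 1 := by
  simpa [h] using gen_pow (n := n) i

/-- The homomorphism sending the generators to prescribed elements of the right orders. -/
def lift (h : ι → H) (hh : ∀ i, h i ^ n i = 1) : CyclicFreeProduct n →* H :=
  Monoid.CoprodI.lift fun i => AddMonoidHom.toMultiplicativeLeft <|
    ZMod.lift (n i) ⟨zmultiplesHom (Additive H) (Additive.ofMul (h i)), by
      simp [← ofMul_pow, hh]⟩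

theorem lift_gen (h : ι → H) (hh : ∀ i, h i ^ n i = 1) (i : ι) :
    lift h hh (gen n i) = h i := by
  have := ZMod.lift_coe (n i) ⟨zmultiplesHom (Additive H) (Additive.ofMul (h i)), by
      simp [← ofMul_pow, hh]⟩ 1
  rw [lift, gen, Monoid.CoprodI.lift_of]
  simpa using congrArg Additive.toMul this

theorem eq_top_of_gen_mem {K : Subgroup (CyclicFreeProduct n)} (hK : ∀ i, gen n i ∈ K) :
    K = ⊤ := by
  refine (Subgroup.eq_top_iff' K).mpr fun x => ?_
  induction x using Monoid.CoprodI.induction_on with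
  | one => exact K.one_mem
  | mul x y hx hy => exact K.mul_mem hx hy
  | of i g =>
    obtain ⟨k, hk⟩ := ZMod.intCast_surjective g.toAdd
    have : Monoid.CoprodI.of (M := fun i => Multiplicative (ZMod (n i))) g = gen n i ^ k := by
      rw [gen, ← map_zpow, ← ofAdd_zsmul, zsmul_one, hk, ofAdd_toAdd]
    exact this ▸ K.zpow_mem (hK i) k

end CyclicFreeProduct

/-- The product `F 0 * F 1 * ⋯ * F (p - 1)`. -/
def seqProd {H : Type*} [Monoid H] (F : ℕ → H) (p : ℕ) : H :=
  ((List.range p).map F).prod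

section seqProd

variable {H : Type*} [Group H] {F : ℕ → H}

theorem seqProd_succ (F : ℕ → H) (p : ℕ) : seqProd F (p + 1) = seqProd F p * F p :=
  List.prod_range_succ F p

theorem seqProd_succ' (F : ℕ → H) (p : ℕ) :
    seqProd F (p + 1) = F 0 * seqProd (fun k => F (k + 1)) p :=
  List.prod_range_succ' F p

theorem seqProd_add (F : ℕ → H) (p q : ℕ) :
    seqProd F (p + q) = seqProd F p * seqProd (fun k => F (p + k)) q := by
  induction q with
  | zero => simp [seqProd]
  | succ q ih => rw [← add_assoc, seqProd_succ, seqProd_succ, ih, mul_assoc]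

theorem seqProd_congr {F' : ℕ → H} {p : ℕ} (h : ∀ k < p, F k = F' k) :
    seqProd F p = seqProd F' p := by
  unfold seqProd
  congr 1
  exact List.map_congr_left fun k hk => h k (List.mem_range.mp hk)

theorem map_seqProd {K : Type*} [Group K] (f : H →* K) (F : ℕ → H) (p : ℕ) :
    f (seqProd F p) = seqProd (fun k => f (F k)) p := by
  simp [seqProd, map_list_prod, Function.comp_def]

theorem seqProd_conj (c : H) (F : ℕ → H) (p : ℕ) :
    seqProd (fun k => c⁻¹ * F k * c) p = c⁻¹ * seqProd F p * c := by
  induction p with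
  | zero => simp [seqProd]
  | succ p ih => rw [seqProd_succ, seqProd_succ, ih]; group

theorem seq_add_mul {c : H} {d : ℕ} (hF : ∀ n, F (n + d) = c⁻¹ * F n * c) (n k : ℕ) :
    F (n + d * k) = (c ^ k)⁻¹ * F n * c ^ k := by
  induction k with
  | zero => simp
  | succ k ih => rw [mul_add_one, ← add_assoc, hF, ih, pow_succ]; group

theorem seqProd_mul {c : H} {d : ℕ} (hF : ∀ n, F (n + d) = c⁻¹ * F n * c) (k : ℕ) :
    seqProd F (d * k) = (seqProd F d * c⁻¹) ^ k * c ^ k := by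
  induction k with
  | zero => simp [seqProd]
  | succ k ih =>
    have : (fun j => F (d + j)) = fun j => c⁻¹ * F j * c := funext fun j => by rw [add_comm, hF]
    rw [mul_add_one, add_comm, seqProd_add, this, seqProd_conj, ih, pow_succ' (_ * _), pow_succ c]
    simp only [mul_assoc]

theorem seqProd_shift {D : H} {l : ℕ} (hF : ∀ n, F (n + l) = D⁻¹ * F n * D)
    (hD : seqProd F l = D) (i : ℕ) : seqProd (fun k => F (i + k)) l = D := by
  induction i with
  | zero => simpa using hD
  | succ i ih =>
    have h := seqProd_succ' (fun k => F (i + k)) l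
    rw [seqProd_succ, ih, hF] at h
    have h' : (fun k => F (i + (k + 1))) = fun k => F (i + 1 + k) :=
      funext fun k => by rw [add_assoc, add_comm k]
    rw [h'] at h
    apply mul_left_cancel (a := F i)
    simpa [mul_assoc] using h.symm

end seqProd

section circSeq

variable (m ℓ : ℕ)

/-- The `m`-periodic sequence of generators of `G(m,ℓ)`, indexed by natural numbers. -/
def circSeq (n : ℕ) : CircularGroup m ℓ := circGen m ℓ (n : ZMod m)

variable {m ℓ}

theorem circS_natCast (i p : ℕ) :
    circS m ℓ (i : ZMod m) p = seqProd (fun k => circSeq m ℓ (i + k)) p := by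
  simp [circS, seqProd, circSeq, ← List.map_eq_flatMap, Function.comp_def]

theorem circS_eq_mk (i : ZMod m) (p : ℕ) :
    circS m ℓ i p = PresentedGroup.mk (circRels m ℓ) (circWord m i p) := by
  simp only [circS, circWord, map_list_prod, List.map_map]
  rfl

theorem circS_natCast_eq_circDelta (i : ℕ) : circS m ℓ (i : ZMod m) ℓ = circDelta m ℓ := by
  induction i with
  | zero => simp [circDelta]
  | succ i ih =>
    rw [← ih, circS_eq_mk, circS_eq_mk, eq_comm, ← mul_inv_eq_one, ← map_inv, ← map_mul]
    exact PresentedGroup.one_of_mem ⟨(i : ZMod m), by push_cast; rfl⟩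

theorem seqProd_circSeq (i : ℕ) :
    seqProd (fun k => circSeq m ℓ (i + k)) ℓ = circDelta m ℓ := by
  rw [← circS_natCast, circS_natCast_eq_circDelta]

theorem circSeq_eq_of_modEq {n k : ℕ} (h : n ≡ k [MOD m]) : circSeq m ℓ n = circSeq m ℓ k := by
  rw [circSeq, (ZMod.natCast_eq_natCast_iff n k m).mpr h, circSeq]

theorem circSeq_add_self (n : ℕ) :
    circSeq m ℓ (n + ℓ) = (circDelta m ℓ)⁻¹ * circSeq m ℓ n * circDelta m ℓ := by
  have h := seqProd_succ' (fun k => circSeq m ℓ (n + k)) ℓ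
  have h' : (fun k => circSeq m ℓ (n + (k + 1))) = fun k => circSeq m ℓ (n + 1 + k) :=
    funext fun k => by rw [add_assoc, add_comm k]
  rw [seqProd_succ, h', seqProd_circSeq, seqProd_circSeq] at h
  rw [mul_assoc, eq_inv_mul_iff_mul_eq]
  simpa using h

variable [NeZero m] {H : Type*} [Group H]

theorem closure_circSeq : Subgroup.closure (Set.range (circSeq m ℓ)) = ⊤ := by
  rw [← PresentedGroup.closure_range_of]
  congr 1
  ext x
  constructor
  · rintro ⟨n, rfl⟩
    exact ⟨n, rfl⟩
  · rintro ⟨j, rfl⟩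
    exact ⟨j.val, by simp [circSeq, circGen]⟩

/-- The homomorphism from `G(m,ℓ)` determined by an `m`-periodic sequence. -/
def circLift {F : ℕ → H} (hper : Function.Periodic F m) {D : H}
    (hF : ∀ i, seqProd (fun k => F (i + k)) ℓ = D) : CircularGroup m ℓ →* H :=
  PresentedGroup.toGroup (f := fun j : ZMod m => F j.val) <| by
    have key (i : ZMod m) : FreeGroup.lift (fun j : ZMod m => F j.val) (circWord m i ℓ) = D := by
      have hval (k : ℕ) : F (i + (k : ZMod m)).val = F (i.val + k) := by
        have : i + (k : ZMod m) = ((i.val + k : ℕ) : ZMod m) := by simp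
        rw [this, ZMod.val_natCast, hper.map_mod_nat]
      simp [← hF i.val, circWord, map_list_prod, seqProd, ← List.map_eq_flatMap,
        Function.comp_def, hval]
    rintro r ⟨i, rfl⟩
    rw [map_mul, map_inv, key, key, mul_inv_cancel]

theorem circLift_circSeq {F : ℕ → H} (hper : Function.Periodic F m) {D : H}
    (hF : ∀ i, seqProd (fun k => F (i + k)) ℓ = D) (n : ℕ) :
    circLift hper hF (circSeq m ℓ n) = F n := by
  rw [circLift, circSeq, circGen, PresentedGroup.toGroup.of, ZMod.val_natCast, hper.map_mod_nat]

theorem circLift_circDelta {F : ℕ → H} (hper : Function.Periodic F m) {D : H}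
    (hF : ∀ i, seqProd (fun k => F (i + k)) ℓ = D) :
    circLift hper hF (circDelta m ℓ) = D := by
  rw [← seqProd_circSeq 0, map_seqProd]
  simp only [circLift_circSeq, hF]

theorem circDelta_zpow_ne_one (hℓ : ℓ ≠ 0) {k : ℤ} (hk : k ≠ 0) : circDelta m ℓ ^ k ≠ 1 := by
  intro h
  let f : CircularGroup m ℓ →* Multiplicative ℤ :=
    circLift (F := fun _ => Multiplicative.ofAdd 1) (fun _ => rfl) (fun _ => rfl)
  have hf : f (circDelta m ℓ) = Multiplicative.ofAdd (ℓ : ℤ) := by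
    refine (circLift_circDelta _ _).trans ?_
    simp [seqProd, ← ofAdd_nsmul]
  have := congrArg (fun x => (f x).toAdd) h
  simp [hf, hk, hℓ] at this

end circSeq

section gcd

variable {d a b u : ℕ}

theorem circSeq_add_gcd (hu : u * b ≡ 1 [MOD a]) (n : ℕ) :
    circSeq (d * a) (d * b) (n + d) =
      (circDelta (d * a) (d * b) ^ u)⁻¹ * circSeq (d * a) (d * b) n *
        circDelta (d * a) (d * b) ^ u := by
  rw [← seq_add_mul circSeq_add_self]
  apply circSeq_eq_of_modEq
  apply Nat.ModEq.add_left
  simpa [mul_left_comm, mul_comm] using (hu.mul_left' d).symm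

theorem circDelta_pow_mem_center [NeZero (d * a)] :
    circDelta (d * a) (d * b) ^ a ∈ Subgroup.center (CircularGroup (d * a) (d * b)) := by
  rw [Subgroup.center_eq_iInf closure_circSeq]
  simp only [Subgroup.mem_iInf, Set.forall_mem_range]
  intro n
  rw [Subgroup.mem_centralizer_singleton_iff]
  have h := seq_add_mul (circSeq_add_self (m := d * a) (ℓ := d * b)) n a
  have h' : n + d * b * a ≡ n [MOD d * a] := by
    rw [mul_right_comm]
    simp [Nat.ModEq]
  rw [circSeq_eq_of_modEq h', mul_assoc, eq_inv_mul_iff_mul_eq] at h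
  exact h

/-- The orders of the free factors of the central quotient of `G(d * a, d * b)`. -/
def circOrder (d a b : ℕ) : Option ℕ → ℕ
  | none => a
  | some 0 => b
  | some (r + 1) => if r + 1 < d then 0 else 1

open CyclicFreeProduct

/-- The images of the first `d` generators of `G(d * a, d * b)` in the central quotient. -/
def circBase (d a b u : ℕ) : ℕ → CyclicFreeProduct (circOrder d a b)
  | 0 => gen _ (some 0) * gen _ none ^ u * (seqProd (fun k => gen _ (some (k + 1))) (d - 1))⁻¹
  | r + 1 => gen _ (some (r + 1))

/-- The images of all generators of `G(d * a, d * b)` in the central quotient. -/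
def circImage (d a b u n : ℕ) : CyclicFreeProduct (circOrder d a b) :=
  ((gen _ none ^ u) ^ (n / d))⁻¹ * circBase d a b u (n % d) * (gen _ none ^ u) ^ (n / d)

theorem circImage_of_lt {n : ℕ} (h : n < d) : circImage d a b u n = circBase d a b u n := by
  simp [circImage, Nat.div_eq_of_lt h, Nat.mod_eq_of_lt h]

theorem circImage_add_gcd (hd : 0 < d) (n : ℕ) :
    circImage d a b u (n + d) =
      (gen _ none ^ u)⁻¹ * circImage d a b u n * gen _ none ^ u := by
  rw [circImage, circImage, Nat.add_div_right n hd, Nat.add_mod_right, pow_succ]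
  group

theorem gen_none_pow : gen (circOrder d a b) none ^ a = 1 := gen_pow none

theorem pow_eq_self_of_modEq {H : Type*} [Group H] {D : H} (hD : D ^ a = 1)
    (hu : u * b ≡ 1 [MOD a]) : (D ^ u) ^ b = D := by
  rw [← pow_mul]
  simpa using pow_eq_pow_iff_modEq.mpr (hu.of_dvd (orderOf_dvd_of_pow_eq_one hD))

theorem circImage_periodic (hd : 0 < d) : Function.Periodic (circImage d a b u) (d * a) := by
  intro n
  rw [seq_add_mul (circImage_add_gcd hd), ← pow_mul, mul_comm u a, pow_mul, gen_none_pow]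
  simp

theorem seqProd_circImage_gcd (hd : 0 < d) :
    seqProd (circImage d a b u) d = gen _ (some 0) * gen _ none ^ u := by
  rw [seqProd_congr fun k hk => circImage_of_lt hk]
  obtain ⟨e, rfl⟩ := Nat.exists_eq_add_one.mpr hd
  rw [seqProd_succ']
  simp [circBase]

theorem seqProd_circImage (hd : 0 < d) (hu : u * b ≡ 1 [MOD a]) (i : ℕ) :
    seqProd (fun k => circImage d a b u (i + k)) (d * b) = gen _ none := by
  have hD := pow_eq_self_of_modEq (gen_none_pow (d := d) (b := b)) hu
  apply seqProd_shift
  · intro n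
    rw [seq_add_mul (circImage_add_gcd hd), hD]
  · rw [seqProd_mul (circImage_add_gcd hd), seqProd_circImage_gcd hd, hD, mul_inv_cancel_right,
      show gen (circOrder d a b) (some 0) ^ b = 1 from gen_pow (some 0), one_mul]

/-- The projection of `G(d * a, d * b)` onto its central quotient. -/
def circProj [NeZero (d * a)] (hd : 0 < d) (hu : u * b ≡ 1 [MOD a]) :
    CircularGroup (d * a) (d * b) →* CyclicFreeProduct (circOrder d a b) :=
  circLift (circImage_periodic hd) (seqProd_circImage hd hu)

variable [NeZero (d * a)]

theorem circProj_surjective (hd : 0 < d) (hu : u * b ≡ 1 [MOD a]) :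
    Function.Surjective (circProj hd hu) := by
  rw [← MonoidHom.range_eq_top]
  apply eq_top_of_gen_mem
  have hnone : gen _ none ∈ (circProj hd hu).range := ⟨circDelta _ _, circLift_circDelta _ _⟩
  rintro (_ | _ | r)
  · exact hnone
  · rw [← Subgroup.mul_mem_cancel_right _ (Subgroup.pow_mem _ hnone u), ← seqProd_circImage_gcd hd]
    refine ⟨seqProd (circSeq _ _) d, ?_⟩
    rw [map_seqProd]
    simp only [circProj, circLift_circSeq]
  · by_cases hr : r + 1 < d
    · exact ⟨circSeq _ _ (r + 1), by rw [circProj, circLift_circSeq, circImage_of_lt hr, circBase]⟩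
    · rw [gen_eq_one (by simp [circOrder, hr])]
      exact Subgroup.one_mem _

theorem ker_circProj_le (hd : 0 < d) (hu : u * b ≡ 1 [MOD a]) :
    (circProj hd hu).ker ≤ Subgroup.zpowers (circDelta (d * a) (d * b) ^ a) := by
  set G := CircularGroup (d * a) (d * b)
  set N : Subgroup G := Subgroup.zpowers (circDelta (d * a) (d * b) ^ a)
  have hN : N ≤ Subgroup.center G := Subgroup.zpowers_le.mpr circDelta_pow_mem_center
  have : N.Normal := ⟨fun x hx y => by
    rwa [Subgroup.mem_center_iff.mp (hN hx) y, mul_inv_cancel_right]⟩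
  set π : G →* G ⧸ N := QuotientGroup.mk' N
  set D := π (circDelta (d * a) (d * b)) with hDdef
  set A : ℕ → G ⧸ N := fun n => π (circSeq (d * a) (d * b) n) with hA
  have hDa : D ^ a = 1 := by
    rw [← map_pow]
    exact (QuotientGroup.eq_one_iff _).mpr (Subgroup.mem_zpowers _)
  have hDu := pow_eq_self_of_modEq hDa hu
  have hAd (n : ℕ) : A (n + d) = (D ^ u)⁻¹ * A n * D ^ u := by
    simp [hA, hDdef, circSeq_add_gcd hu]
  have hprod : seqProd A (d * b) = D := by
    rw [hDdef, ← seqProd_circSeq 0, map_seqProd]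
    simp [hA]
  have hy : (seqProd A d * (D ^ u)⁻¹) ^ b = 1 := by
    rwa [seqProd_mul hAd, hDu, mul_eq_right] at hprod
  let h : Option ℕ → G ⧸ N
    | none => D
    | some 0 => seqProd A d * (D ^ u)⁻¹
    | some (r + 1) => if r + 1 < d then A (r + 1) else 1
  let g : CyclicFreeProduct (circOrder d a b) →* G ⧸ N := lift h <| by
    rintro (_ | _ | r)
    · exact hDa
    · exact hy
    · by_cases hr : r + 1 < d <;> simp [h, circOrder, hr]
  have hgD : g (gen _ none) = D := lift_gen _ _ _
  have hgy : g (gen _ (some 0)) = seqProd A d * (D ^ u)⁻¹ := lift_gen _ _ _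
  have hgr {r : ℕ} (hr : r + 1 < d) : g (gen _ (some (r + 1))) = A (r + 1) := by
    rw [lift_gen]
    simp [h, hr]
  have hbase {r : ℕ} (hr : r < d) : g (circBase d a b u r) = A r := by
    cases r with
    | succ r => exact hgr hr
    | zero =>
      rw [circBase, map_mul, map_mul, map_inv, map_pow, hgy, hgD, inv_mul_cancel_right,
        map_seqProd, seqProd_congr (F' := fun k => A (k + 1)) fun k hk => hgr (by omega),
        mul_inv_eq_iff_eq_mul, ← seqProd_succ', Nat.sub_add_cancel hd]
  have hcomp : g.comp (circProj hd hu) = π := by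
    apply MonoidHom.eq_of_eqOn_dense closure_circSeq
    rintro _ ⟨n, rfl⟩
    have hn := seq_add_mul hAd (n % d) (n / d)
    rw [Nat.mod_add_div] at hn
    rw [MonoidHom.comp_apply, circProj, circLift_circSeq, circImage]
    simp only [map_mul, map_inv, map_pow, hgD, hbase (Nat.mod_lt n hd)]
    exact hn.symm
  intro x hx
  rw [← QuotientGroup.eq_one_iff]
  change π x = 1
  rw [← hcomp, MonoidHom.comp_apply, hx, map_one]

theorem center_le_zpowers (hd : 0 < d) (hu : u * b ≡ 1 [MOD a]) {p q : Option ℕ} (hpq : p ≠ q)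
    (hp : circOrder d a b p ≠ 1) (hq : circOrder d a b q ≠ 1) :
    Subgroup.center (CircularGroup (d * a) (d * b)) ≤
      Subgroup.zpowers (circDelta (d * a) (d * b) ^ a) := by
  intro x hx
  apply ker_circProj_le hd hu
  have : Nontrivial (ZMod (circOrder d a b p)) := ZMod.nontrivial_iff.mpr hp
  have : Nontrivial (ZMod (circOrder d a b q)) := ZMod.nontrivial_iff.mpr hq
  refine Monoid.CoprodI.eq_one_of_mem_center hpq (Subgroup.mem_center_iff.mpr fun y => ?_)
  obtain ⟨y, rfl⟩ := circProj_surjective hd hu y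
  rw [← map_mul, ← map_mul, Subgroup.mem_center_iff.mp hx]

end gcd

/-- For `m, ℓ ≥ 2` with `(m,ℓ) ≠ (2,2)`, the center of `G(m,ℓ)` is infinite cyclic,
generated by `Δ^(m / gcd(m,ℓ))`. -/
theorem center_circular_group (m ℓ : ℕ) (hm : 2 ≤ m) (hℓ : 2 ≤ ℓ) (hne : (m, ℓ) ≠ (2, 2)) :
    (∀ k : ℤ, k ≠ 0 → ((circDelta m ℓ) ^ (m / Nat.gcd m ℓ)) ^ k ≠ 1) ∧
    Subgroup.center (CircularGroup m ℓ) =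
      Subgroup.zpowers ((circDelta m ℓ) ^ (m / Nat.gcd m ℓ)) := by
  have hd : 0 < m.gcd ℓ := Nat.gcd_pos_of_pos_left ℓ (by omega)
  generalize hdef : m.gcd ℓ = d at hd ⊢
  obtain ⟨a, rfl⟩ : d ∣ m := hdef ▸ Nat.gcd_dvd_left m ℓ
  obtain ⟨b, rfl⟩ : d ∣ ℓ := hdef ▸ Nat.gcd_dvd_right _ ℓ
  have hab : b.Coprime a := by
    rw [Nat.gcd_mul_left] at hdef
    exact Nat.Coprime.symm (Nat.eq_of_mul_eq_mul_left hd (by simpa using hdef))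
  have ha : 0 < a := Nat.pos_of_ne_zero fun h => by simp [h] at hm
  have : NeZero (d * a) := ⟨by omega⟩
  have : NeZero a := ⟨ha.ne'⟩
  obtain ⟨u, hu⟩ : ∃ u, u * b ≡ 1 [MOD a] := by
    refine ⟨((b : ZMod a)⁻¹).val, (ZMod.natCast_eq_natCast_iff _ _ _).mp ?_⟩
    rw [Nat.cast_mul, ZMod.natCast_zmod_val, mul_comm, ZMod.coe_mul_inv_eq_one b hab, Nat.cast_one]
  rw [Nat.mul_div_cancel_left a hd]
  constructor
  · intro k hk
    rw [← zpow_natCast, ← zpow_mul]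
    exact circDelta_zpow_ne_one (by omega) (mul_ne_zero (by exact_mod_cast ha.ne') hk)
  · refine le_antisymm ?_ (Subgroup.zpowers_le.mpr circDelta_pow_mem_center)
    obtain ⟨p, q, hpq, hp, hq⟩ : ∃ p q, p ≠ q ∧ circOrder d a b p ≠ 1 ∧ circOrder d a b q ≠ 1 := by
      obtain rfl | rfl | hd3 : d = 1 ∨ d = 2 ∨ 3 ≤ d := by omega
      · exact ⟨none, some 0, by simp, by simp only [circOrder]; omega,
          by simp only [circOrder]; omega⟩
      · by_cases ha1 : a = 1
        · exact ⟨some 0, some 1, by simp, by simp only [circOrder]; grind, by simp [circOrder]⟩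
        · exact ⟨none, some 1, by simp, by simpa only [circOrder], by simp [circOrder]⟩
      · exact ⟨some 1, some 2, by simp, by simp [circOrder]; omega, by simp [circOrder]; omega⟩
    exact center_le_zpowers hd hu hpq hp hq
end

section
/- Let m and ℓ be positive integers, let k, i be integers and let p satisfy 0 < p < ℓ. The element x = Δ^k s(i,p) of G(m,ℓ) is periodic if and only if m divides p + kℓ. Moreover, if m divides p + kℓ, then x^{ℓ/g} = Δ^{(p+kℓ)/g}, where g = gcd(p,ℓ). -/
/-- An element `x` of `G(m,ℓ)` is *periodic* if `x^a = Δ^b` for some nonzero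
integer `a` and some integer `b`. -/
def CircIsPeriodic (m ℓ : ℕ) (x : CircularGroup m ℓ) : Prop :=
  ∃ a : ℤ, a ≠ 0 ∧ ∃ b : ℤ, x ^ a = (circDelta m ℓ) ^ b

theorem circS_succ (m ℓ : ℕ) (i : ZMod m) (p : ℕ) :
    circS m ℓ i (p + 1) = circS m ℓ i p * circGen m ℓ (i + p) := by
  simp [circS, List.range_succ]

theorem circS_add (m ℓ : ℕ) (i : ZMod m) (p q : ℕ) :
    circS m ℓ i (p + q) = circS m ℓ i p * circS m ℓ (i + p) q := by
  induction q with
  | zero => simp [circS]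
  | succ q ih =>
    rw [← add_assoc, circS_succ, ih, circS_succ, mul_assoc]
    push_cast
    rw [add_assoc]

theorem circWord_succ (m : ℕ) (i : ZMod m) (p : ℕ) :
    circWord m i (p + 1) = circWord m i p * FreeGroup.of (i + p) := by
  simp [circWord, List.range_succ]

theorem mk_circWord (m ℓ : ℕ) (i : ZMod m) (p : ℕ) :
    PresentedGroup.mk (circRels m ℓ) (circWord m i p) = circS m ℓ i p := by
  simp only [circWord, circS, map_list_prod, List.map_map]
  rfl

theorem circS_length_add_one (m ℓ : ℕ) (i : ZMod m) :
    circS m ℓ (i + 1) ℓ = circS m ℓ i ℓ := by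
  have h := PresentedGroup.one_of_mem (rels := circRels m ℓ) ⟨i, rfl⟩
  rw [map_mul, map_inv, mk_circWord, mk_circWord, mul_inv_eq_one] at h
  exact h.symm

/-- Every factor `s(i,ℓ)` equals the Garside element. -/
theorem circS_length {m : ℕ} (hm : 0 < m) (ℓ : ℕ) (i : ZMod m) :
    circS m ℓ i ℓ = circDelta m ℓ := by
  have : NeZero m := ⟨hm.ne'⟩
  have key : ∀ n : ℕ, circS m ℓ (n : ZMod m) ℓ = circDelta m ℓ := by
    intro n
    induction n with
    | zero => simp [circDelta]
    | succ n ih => rw [Nat.cast_succ, circS_length_add_one, ih]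
  simpa using key i.val

theorem circS_mul_length {m : ℕ} (hm : 0 < m) (ℓ : ℕ) (i : ZMod m) (q : ℕ) :
    circS m ℓ i (q * ℓ) = circDelta m ℓ ^ q := by
  induction q with
  | zero => simp [circS]
  | succ q ih => rw [add_mul, one_mul, circS_add, ih, circS_length hm, pow_succ]

theorem circS_mul_delta {m : ℕ} (hm : 0 < m) (ℓ : ℕ) (i : ZMod m) (p : ℕ) :
    circS m ℓ i p * circDelta m ℓ = circDelta m ℓ * circS m ℓ (i + ℓ) p := by
  rw [← circS_length hm ℓ (i + p), ← circS_add, add_comm p ℓ, circS_add, circS_length hm,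
    circS_length hm]

theorem circS_mul_delta_zpow {m : ℕ} (hm : 0 < m) (ℓ : ℕ) (i : ZMod m) (p : ℕ) (k : ℤ) :
    circS m ℓ i p * circDelta m ℓ ^ k = circDelta m ℓ ^ k * circS m ℓ (i + k * ℓ) p := by
  induction k using Int.induction_on with
  | zero => simp
  | succ n ih =>
    rw [zpow_add_one, ← mul_assoc, ih, mul_assoc, circS_mul_delta hm, ← mul_assoc]
    congr 2
    push_cast
    ring
  | pred n ih =>
    rw [zpow_sub_one, ← mul_assoc, ih, mul_assoc, mul_assoc]
    congr 1
    rw [mul_inv_eq_iff_eq_mul, mul_assoc, circS_mul_delta hm, inv_mul_cancel_left]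
    congr 1
    push_cast
    ring

theorem delta_zpow_mul_circS_pow {m : ℕ} (hm : 0 < m) (ℓ : ℕ) (k : ℤ) (i : ZMod m) (p : ℕ)
    (h : (m : ℤ) ∣ p + k * ℓ) (n : ℕ) :
    (circDelta m ℓ ^ k * circS m ℓ i p) ^ n =
      circDelta m ℓ ^ (k * n) * circS m ℓ (i + p - n * p) (n * p) := by
  have hkℓ : (k : ZMod m) * ℓ = -p := by
    have h' := (ZMod.intCast_zmod_eq_zero_iff_dvd _ m).2 h
    push_cast at h'
    linear_combination h'
  induction n with
  | zero => simp [circS]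
  | succ n ih =>
    have hs : (k * (n : ℤ) : ℤ) * (ℓ : ZMod m) = -(n * p) := by
      push_cast
      linear_combination (n : ZMod m) * hkℓ
    rw [pow_succ', ih, mul_assoc, ← mul_assoc (circS m ℓ i p), circS_mul_delta_zpow hm, hs,
      mul_assoc, ← mul_assoc (_ ^ k), ← zpow_add, add_mul, one_mul, add_comm (n * p) p, circS_add]
    congr 2
    · push_cast
      ring
    · congr 1
      push_cast
      ring
    · congr 1
      push_cast
      ring

/-- `(Δ^k s(i,p))^(ℓ/g) = Δ^((p+kℓ)/g)` with `g = gcd(p,ℓ)`, whenever `m ∣ p + kℓ`. -/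
theorem delta_zpow_mul_circS_pow_div_gcd {m ℓ : ℕ} (hm : 0 < m) (hℓ : 0 < ℓ) (k : ℤ)
    (i : ZMod m) (p : ℕ) (h : (m : ℤ) ∣ p + k * ℓ) :
    (circDelta m ℓ ^ k * circS m ℓ i p) ^ (ℓ / Nat.gcd p ℓ) =
      circDelta m ℓ ^ (((p : ℤ) + k * ℓ) / (Nat.gcd p ℓ : ℤ)) := by
  rw [delta_zpow_mul_circS_pow hm ℓ k i p h]
  have hg : 0 < Nat.gcd p ℓ := Nat.gcd_pos_of_pos_right p hℓ
  generalize hgdef : Nat.gcd p ℓ = g at *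
  obtain ⟨q, hq⟩ : g ∣ p := hgdef ▸ Nat.gcd_dvd_left p ℓ
  obtain ⟨r, hr⟩ : g ∣ ℓ := hgdef ▸ Nat.gcd_dvd_right p ℓ
  have h1 : ℓ / g = r := by rw [hr, Nat.mul_div_cancel_left r hg]
  have h2 : ((p : ℤ) + k * ℓ) / (g : ℤ) = k * r + q := by
    apply Int.ediv_eq_of_eq_mul_right (by exact_mod_cast hg.ne')
    rw [hq, hr]
    push_cast
    ring
  have h3 : r * p = q * ℓ := by
    rw [hq, hr]
    ring
  rw [h1, h2, h3, circS_mul_length hm, zpow_add, zpow_natCast]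

/-- In a free product, a product of nontrivial elements of two distinct factors has infinite
order. -/
theorem coprodI_of_mul_of_pow_ne_one {ι : Type*} {M : ι → Type*} [∀ i, Monoid (M i)]
    {i j : ι} (hij : i ≠ j) {u : M i} {v : M j} (hu : u ≠ 1) (hv : v ≠ 1) {n : ℕ} (hn : n ≠ 0) :
    (Monoid.CoprodI.of u * Monoid.CoprodI.of v : Monoid.CoprodI M) ^ n ≠ 1 := by
  classical
  obtain ⟨n, rfl⟩ := Nat.exists_eq_succ_of_ne_zero hn
  obtain ⟨w, hw⟩ : ∃ w : Monoid.CoprodI.NeWord M i j,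
      w.prod = (Monoid.CoprodI.of u * Monoid.CoprodI.of v) ^ (n + 1) := by
    clear hn
    induction n with
    | zero => exact ⟨.append (.singleton u hu) hij (.singleton v hv), by simp⟩
    | succ n ih =>
      obtain ⟨w, hw⟩ := ih
      exact ⟨.append w hij.symm (.append (.singleton u hu) hij (.singleton v hv)), by
        simp [hw, pow_succ]⟩
  rw [Nat.succ_eq_add_one, ← hw]
  intro h
  apply w.toList_ne_nil
  have : w.toWord = Monoid.CoprodI.Word.empty :=
    Monoid.CoprodI.Word.equiv.symm.injective h
  exact congrArg Monoid.CoprodI.Word.toList this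

/-- The two factors of the free product `ℤ/m * ℤ/ℓ`. -/
abbrev CyclicFactor (m ℓ : ℕ) (c : Bool) : Type := Multiplicative (ZMod (bif c then ℓ else m))

/-- The free product `ℤ/m * ℤ/ℓ`. -/
abbrev CyclicCoprod (m ℓ : ℕ) := Monoid.CoprodI (CyclicFactor m ℓ)

/-- The elements of the factor `ℤ/m` of `ℤ/m * ℤ/ℓ`. -/
def rotM (m ℓ : ℕ) (z : ZMod m) : CyclicCoprod m ℓ :=
  Monoid.CoprodI.of (i := false) (Multiplicative.ofAdd z)

/-- The elements of the factor `ℤ/ℓ` of `ℤ/m * ℤ/ℓ`. -/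
def rotL (m ℓ : ℕ) (z : ZMod ℓ) : CyclicCoprod m ℓ :=
  Monoid.CoprodI.of (i := true) (Multiplicative.ofAdd z)

theorem rotM_add (m ℓ : ℕ) (z w : ZMod m) : rotM m ℓ (z + w) = rotM m ℓ z * rotM m ℓ w :=
  MonoidHom.map_mul (Monoid.CoprodI.of (M := CyclicFactor m ℓ) (i := false))
    (Multiplicative.ofAdd z) (Multiplicative.ofAdd w)

theorem rotL_add (m ℓ : ℕ) (z w : ZMod ℓ) : rotL m ℓ (z + w) = rotL m ℓ z * rotL m ℓ w :=
  MonoidHom.map_mul (Monoid.CoprodI.of (M := CyclicFactor m ℓ) (i := true))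
    (Multiplicative.ofAdd z) (Multiplicative.ofAdd w)

theorem rotM_zero (m ℓ : ℕ) : rotM m ℓ 0 = 1 :=
  MonoidHom.map_one (Monoid.CoprodI.of (i := false))

theorem rotL_zero (m ℓ : ℕ) : rotL m ℓ 0 = 1 :=
  MonoidHom.map_one (Monoid.CoprodI.of (i := true))

theorem rotM_intCast_mul (m ℓ : ℕ) (n : ℤ) (z : ZMod m) : rotM m ℓ (n * z) = rotM m ℓ z ^ n := by
  rw [← zsmul_eq_mul]
  exact MonoidHom.map_zpow (Monoid.CoprodI.of (M := CyclicFactor m ℓ) (i := false))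
    (Multiplicative.ofAdd z) n

theorem rotM_neg (m ℓ : ℕ) (z : ZMod m) : rotM m ℓ (-z) = (rotM m ℓ z)⁻¹ := by
  rw [eq_inv_iff_mul_eq_one, ← rotM_add, neg_add_cancel, rotM_zero]

theorem rotL_mul_rotM_pow_ne_one (m ℓ : ℕ) {z : ZMod ℓ} {w : ZMod m} (hz : z ≠ 0) (hw : w ≠ 0)
    {n : ℕ} (hn : n ≠ 0) : (rotL m ℓ z * rotM m ℓ w) ^ n ≠ 1 :=
  coprodI_of_mul_of_pow_ne_one (i := true) (j := false) (by decide)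
    (by simpa using hz) (by simpa using hw) hn

theorem lift_circWord (m ℓ : ℕ) (i : ZMod m) (p : ℕ) :
    FreeGroup.lift (fun j : ZMod m => rotM m ℓ (-j) * rotL m ℓ 1 * rotM m ℓ (j + 1))
      (circWord m i p) = rotM m ℓ (-i) * rotL m ℓ p * rotM m ℓ (i + p) := by
  induction p with
  | zero => simp [circWord, rotL_zero, rotM_neg]
  | succ p ih =>
    rw [circWord_succ, map_mul, ih, FreeGroup.lift_apply_of, rotM_neg m ℓ (i + p)]
    push_cast
    rw [rotL_add, ← add_assoc]
    group

/-- The homomorphism `G(m,ℓ) → ℤ/m * ℤ/ℓ` sending `a_j` to `t^(-j) b t^(j+1)`, where `t` and `b`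
generate the two factors. -/
def circToCoprod (m ℓ : ℕ) : CircularGroup m ℓ →* CyclicCoprod m ℓ :=
  PresentedGroup.toGroup
    (f := fun j : ZMod m => rotM m ℓ (-j) * rotL m ℓ 1 * rotM m ℓ (j + 1)) (by
      rintro r ⟨i, rfl⟩
      rw [map_mul, map_inv, lift_circWord, lift_circWord, mul_inv_eq_one, ZMod.natCast_self,
        rotL_zero, mul_one, mul_one, ← rotM_add, ← rotM_add]
      congr 1
      ring)

theorem circToCoprod_circS (m ℓ : ℕ) (i : ZMod m) (p : ℕ) :
    circToCoprod m ℓ (circS m ℓ i p) = rotM m ℓ (-i) * rotL m ℓ p * rotM m ℓ (i + p) := by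
  rw [← mk_circWord, ← lift_circWord]
  rfl

theorem circToCoprod_delta (m ℓ : ℕ) : circToCoprod m ℓ (circDelta m ℓ) = rotM m ℓ ℓ := by
  simp [circDelta, circToCoprod_circS, rotL_zero, rotM_zero]

theorem circToCoprod_delta_zpow_mul_circS (m ℓ : ℕ) (k : ℤ) (i : ZMod m) (p : ℕ) :
    circToCoprod m ℓ (circDelta m ℓ ^ k * circS m ℓ i p) =
      rotM m ℓ (k * ℓ - i) * (rotL m ℓ p * rotM m ℓ (p + k * ℓ)) * (rotM m ℓ (k * ℓ - i))⁻¹ := by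
  rw [map_mul, map_zpow, circToCoprod_delta, circToCoprod_circS, ← rotM_intCast_mul, ← rotM_neg]
  simp only [← mul_assoc, ← rotM_add]
  rw [mul_assoc _ (rotM m ℓ _) (rotM m ℓ _), ← rotM_add]
  congr 2
  · rw [sub_eq_add_neg]
  · ring

theorem dvd_of_circIsPeriodic {m ℓ : ℕ} (hm : 0 < m) (k : ℤ) (i : ZMod m) (p : ℕ)
    (hp : 0 < p) (hpℓ : p < ℓ)
    (h : CircIsPeriodic m ℓ (circDelta m ℓ ^ k * circS m ℓ i p)) : (m : ℤ) ∣ p + k * ℓ := by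
  obtain ⟨a, ha, b, hab⟩ := h
  by_contra hdvd
  have hz : (p : ZMod ℓ) ≠ 0 := by
    rw [Ne, ZMod.natCast_eq_zero_iff]
    exact Nat.not_dvd_of_pos_of_lt hp hpℓ
  have hw : (p + k * ℓ : ZMod m) ≠ 0 := fun h0 =>
    hdvd ((ZMod.intCast_zmod_eq_zero_iff_dvd _ m).1 (by exact_mod_cast h0))
  have hn : (a * m).natAbs ≠ 0 := by
    simp [ha, hm.ne']
  apply rotL_mul_rotM_pow_ne_one m ℓ hz hw hn
  have hab' := congrArg (fun y => circToCoprod m ℓ y ^ (m : ℤ)) hab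
  simp only [map_zpow] at hab'
  rw [circToCoprod_delta_zpow_mul_circS, circToCoprod_delta, ← zpow_mul, ← zpow_mul,
    ← rotM_intCast_mul, conj_zpow] at hab'
  simp only [Int.cast_mul, Int.cast_natCast, ZMod.natCast_self, mul_zero, zero_mul, rotM_zero,
    conj_eq_one_iff] at hab'
  rwa [pow_natAbs_eq_one]

/-- `Δ^k s(i,p)` (with `0 < p < ℓ`) is periodic iff `m ∣ p + kℓ`, in which case
`(Δ^k s(i,p))^(ℓ/g) = Δ^((p+kℓ)/g)` where `g = gcd(p,ℓ)`. -/
theorem periodic_elements_circular (m ℓ : ℕ) (hm : 0 < m) (hℓ : 0 < ℓ)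
    (k i : ℤ) (p : ℕ) (hp : 0 < p) (hpℓ : p < ℓ) :
    (CircIsPeriodic m ℓ ((circDelta m ℓ) ^ k * circS m ℓ (i : ZMod m) p) ↔
      (m : ℤ) ∣ (p + k * ℓ)) ∧
    ((m : ℤ) ∣ (p + k * ℓ) →
      ((circDelta m ℓ) ^ k * circS m ℓ (i : ZMod m) p) ^ (ℓ / Nat.gcd p ℓ) =
        (circDelta m ℓ) ^ (((p : ℤ) + k * ℓ) / (Nat.gcd p ℓ : ℤ))) := by
  have key := delta_zpow_mul_circS_pow_div_gcd hm hℓ k (i : ZMod m) p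
  refine ⟨⟨dvd_of_circIsPeriodic hm k i p hp hpℓ, fun h => ?_⟩, key⟩
  have hpos : ℓ / Nat.gcd p ℓ ≠ 0 :=
    (Nat.div_pos (Nat.gcd_le_right p hℓ) (Nat.gcd_pos_of_pos_right p hℓ)).ne'
  exact ⟨(ℓ / Nat.gcd p ℓ : ℕ), by exact_mod_cast hpos, _, by rw [zpow_natCast, key h]⟩
end
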